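/- Let Ω ⊆ ℝ² be open, Y = {y₁,…,y_N} ⊆ ℝ² distinct points, ψ ∈ (0,∞)^N, and G(x,y,v) = 1/(2v) − (v/2)‖x − y‖². Define the weighted points pᵢ = (ψᵢyᵢ/2, −ψᵢ/4) ∈ ℝ³ and weights rᵢ = ψᵢ²/16 + ψᵢ²‖yᵢ‖²/4 − ψᵢ‖yᵢ‖²/2 + 1/(2ψᵢ). Then for every i ∈ {1,…,N}, the generalized Laguerre cell Lagᵢ(ψ) = {x ∈ Ω : ∀ j, G(x,yᵢ,ψᵢ) ≥ G(x,y_j,ψ_j)} satisfies Lagᵢ(ψ) = Π(Powᵢ(𝒫) ∩ P) ∩ Ω, where P = {(x₁,x₂,x₁² + x₂²) : (x₁,x₂) ∈ ℝ²} is the paraboloid in ℝ³, Π(x₁,x₂,x₃) = (x₁,x₂) is the projection onto ℝ², and Powᵢ(𝒫) = {z ∈ ℝ³ : ∀ j, ‖z − pᵢ‖² − rᵢ ≤ ‖z − p_j‖² − r_j} is the i-th power cell of 𝒫 = ((pᵢ,rᵢ))_{1≤i≤N}. -/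

import Mathlib

set_option autoImplicit false

open MeasureTheory Set

noncomputable section

/-- Build a point of `ℝ³` from coordinates. -/
def e3 (a b c : ℝ) : EuclideanSpace ℝ (Fin 3) := (WithLp.equiv 2 (Fin 3 → ℝ)).symm ![a, b, c]

/-- Build a point of `ℝ²` from coordinates. -/
def e2 (a b : ℝ) : EuclideanSpace ℝ (Fin 2) := (WithLp.equiv 2 (Fin 2 → ℝ)).symm ![a, b]

/-- Proposition 4.5: the Laguerre cells of the near-field reflector generating function
are obtained by intersecting a 3D power diagram with the paraboloid `x₃ = x₁² + x₂²`
and projecting to the plane. -/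
theorem laguerre_eq_power_diagram_on_paraboloid
    (Ω : Set (EuclideanSpace ℝ (Fin 2))) (hΩo : IsOpen Ω) (hΩb : Bornology.IsBounded Ω)
    {N : ℕ} (y : Fin N → EuclideanSpace ℝ (Fin 2)) (hy : Function.Injective y)
    (ψ : Fin N → ℝ) (hψ : ∀ i, 0 < ψ i)
    (p : Fin N → EuclideanSpace ℝ (Fin 3)) (r : Fin N → ℝ)
    (hp : ∀ i, p i = e3 (ψ i / 2 * y i 0) (ψ i / 2 * y i 1) (-ψ i / 4))
    (hr : ∀ i, r i = ψ i ^ 2 / 16 + ψ i ^ 2 * ‖y i‖ ^ 2 / 4 - ψ i * ‖y i‖ ^ 2 / 2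
      + 1 / (2 * ψ i)) :
    ∀ i : Fin N,
      {x ∈ Ω | ∀ j, 1 / (2 * ψ j) - ψ j / 2 * ‖x - y j‖ ^ 2 ≤
        1 / (2 * ψ i) - ψ i / 2 * ‖x - y i‖ ^ 2} =
      ((fun z : EuclideanSpace ℝ (Fin 3) => e2 (z 0) (z 1)) ''
        ({z : EuclideanSpace ℝ (Fin 3) | ∀ j, ‖z - p i‖ ^ 2 - r i ≤ ‖z - p j‖ ^ 2 - r j} ∩
         {z : EuclideanSpace ℝ (Fin 3) | z 2 = (z 0) ^ 2 + (z 1) ^ 2})) ∩ Ω := by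
  intro i
  have key : ∀ (x : EuclideanSpace ℝ (Fin 2)) (z : EuclideanSpace ℝ (Fin 3)),
      z 0 = x 0 → z 1 = x 1 → z 2 = x 0 ^ 2 + x 1 ^ 2 → ∀ j,
      ‖z - p j‖ ^ 2 - r j = ‖z‖ ^ 2 - (1 / (2 * ψ j) - ψ j / 2 * ‖x - y j‖ ^ 2) := by
    intro x z h0 h1 h2 j
    rw [hr, hp]
    simp only [EuclideanSpace.real_norm_sq_eq, Fin.sum_univ_three, Fin.sum_univ_two,
      PiLp.sub_apply, e3, h0, h1, h2]
    simp
    ring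
  ext x
  constructor
  · rintro ⟨hx, h⟩
    refine ⟨⟨e3 (x 0) (x 1) (x 0 ^ 2 + x 1 ^ 2), ⟨?_, ?_⟩, ?_⟩, hx⟩
    · intro j
      have k := key x (e3 (x 0) (x 1) (x 0 ^ 2 + x 1 ^ 2)) (by simp [e3]) (by simp [e3])
        (by simp [e3])
      rw [k i, k j]
      linarith [h j]
    · simp [e3]
    · ext k
      fin_cases k <;> simp [e2, e3]
  · rintro ⟨⟨z, ⟨hz, hz2⟩, rfl⟩, hx⟩
    refine ⟨hx, fun j => ?_⟩
    have k := key (e2 (z 0) (z 1)) z (by simp [e2]) (by simp [e2])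
      (by simpa [e2] using hz2)
    have hj := hz j
    rw [k i, k j] at hj
    linarith
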